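/- arXiv:2305.00653 — 2 statements merged into one kernel-verified Lean document; each statement's English description precedes it below -/
import Mathlib

section
/- Let ι be a finite type, deg : ι → ℕ, and d ≥ 1. Let A, B ∈ Matrix ι ι ℂ be Hermitian with A_{jk} = 0 whenever deg j ≠ deg k and B_{jk} = 0 whenever |deg j − deg k| > d. Let φ, ψ ∈ ℂ^ι be unit vectors with φ supported on {j : deg j = l} and ψ supported on {j : deg j = l'}, and set n₀ = ⌈|l − l'|/d⌉. Then for every t ∈ ℝ, |⟨φ, e^{−𝕚(A+B)t} ψ⟩| ≤ Σ_{n=n₀}^∞ (|t|·‖B‖)ⁿ/n!; in particular, if n₀ ≥ 2|t|·‖B‖ then |⟨φ, e^{−𝕚(A+B)t} ψ⟩| ≤ (2/n₀!) · (|t|·‖B‖)^{n₀}. -/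
open Matrix

/-!
Write `V(s) = e^{s(a+b)} e^{-sa}`. Then `V' = V b(s)` with `b(s) = e^{sa} b e^{-sa}`, and `b(s)`
moves the degree no further than `b` does. Hence differentiating `⟨φ, V(s) ψ⟩` replaces `ψ` by the
vector `b(s) ψ`, which is one step closer to the support of `φ`, and as long as the supports are
disjoint the amplitude vanishes at `s = 0`. Starting from the crude bound `‖V(s)‖ ≤ e^{s‖b‖}`, each
of the `n₀` steps integrates the bound once more, and `n`-fold integration of `exp` from `0` gives
precisely the tail `∑_{k ≥ n} x^k / k!`. This is the remainder estimate for the Dyson series,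
without the series.
-/

/-- The tail `∑_{k ≥ n} x ^ k / k!` of the exponential series, which bounds the remainder of the
Dyson series; `k` is reindexed as `n + k`. -/
noncomputable def expTail (n : ℕ) (x : ℝ) : ℝ :=
  ∑' k : ℕ, x ^ (n + k) / ((n + k).factorial : ℝ)

lemma expTail_eq_exp_sub_sum (n : ℕ) (x : ℝ) :
    expTail n x = Real.exp x - ∑ k ∈ Finset.range n, x ^ k / (k.factorial : ℝ) := by
  rw [Real.exp_eq_exp_ℝ, NormedSpace.exp_eq_tsum_div]
  beta_reduce
  rw [← (Real.summable_pow_div_factorial x).sum_add_tsum_nat_add n, add_sub_cancel_left]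
  simp only [expTail, add_comm n]

lemma expTail_zero (x : ℝ) : expTail 0 x = Real.exp x := by
  simp [expTail_eq_exp_sub_sum]

lemma expTail_succ (n : ℕ) (x : ℝ) :
    expTail (n + 1) x = expTail n x - x ^ n / (n.factorial : ℝ) := by
  rw [expTail_eq_exp_sub_sum, expTail_eq_exp_sub_sum, Finset.sum_range_succ, sub_sub]

lemma expTail_nonneg (n : ℕ) {x : ℝ} (hx : 0 ≤ x) : 0 ≤ expTail n x :=
  tsum_nonneg fun _ => by positivity

lemma expTail_succ_apply_zero (n : ℕ) : expTail (n + 1) 0 = 0 := by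
  simp [expTail]

lemma hasDerivAt_pow_succ_div_factorial (n : ℕ) (x : ℝ) :
    HasDerivAt (fun y : ℝ => y ^ (n + 1) / ((n + 1).factorial : ℝ))
      (x ^ n / (n.factorial : ℝ)) x := by
  refine ((hasDerivAt_pow (n + 1) x).div_const _).congr_deriv ?_
  rw [Nat.factorial_succ, Nat.add_sub_cancel]
  push_cast
  field_simp

lemma hasDerivAt_expTail_succ (n : ℕ) (x : ℝ) :
    HasDerivAt (expTail (n + 1)) (expTail n x) x := by
  induction n with
  | zero =>
    rw [expTail_zero, funext (expTail_succ 0)]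
    simpa [expTail_zero] using (Real.hasDerivAt_exp x).sub_const 1
  | succ n ih =>
    rw [expTail_succ n x, funext (expTail_succ (n + 1))]
    exact ih.sub (hasDerivAt_pow_succ_div_factorial n x)

lemma expTail_le_two_div_factorial_mul_pow {n : ℕ} {x : ℝ} (hx : 0 ≤ x) (hn : 2 * x ≤ n) :
    expTail n x ≤ 2 / (n.factorial : ℝ) * x ^ n := by
  have hratio : ‖(x : ℂ)‖ / n.succ ≤ 1 / 2 := by
    rw [Complex.norm_of_nonneg hx, div_le_iff₀ (by positivity)]
    push_cast
    linarith
  calc expTail n x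
      ≤ ‖(expTail n x : ℂ)‖ := by
        rw [Complex.norm_real]
        exact le_abs_self _
    _ ≤ ‖(x : ℂ)‖ ^ n / n.factorial * 2 := by
        simpa [expTail_eq_exp_sub_sum] using Complex.exp_bound' hratio
    _ = 2 / (n.factorial : ℝ) * x ^ n := by
        rw [Complex.norm_of_nonneg hx]
        ring

section

open NormedSpace (exp exp_add_of_commute exp_zero exp_series_hasSum_exp'
  exp_mem_unitary_of_mem_skewAdjoint map_exp)

section InteractionPicture

variable {𝔸 : Type*} [NormedRing 𝔸] [NormedAlgebra ℝ 𝔸]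

/-- The perturbation `b` in the interaction picture of `a`, with the skew-adjoint convention
`a = -𝕚 H₀` for the generator. -/
noncomputable def interactionPicture (a b : 𝔸) (s : ℝ) : 𝔸 :=
  exp (s • a) * b * exp (-s • a)

/-- The interaction-picture propagator. The free evolution is removed on the right, so that the
propagator solves `V' = V * interactionPicture a b` and acts on initial states. -/
noncomputable def interactionPropagator (a b : 𝔸) (s : ℝ) : 𝔸 :=
  exp (s • (a + b)) * exp (-s • a)

lemma interactionPropagator_zero (a b : 𝔸) : interactionPropagator a b 0 = 1 := by
  simp [interactionPropagator]

lemma norm_interactionPicture_le {a : 𝔸} (ha : ∀ s : ℝ, ‖exp (s • a)‖ ≤ 1) (b : 𝔸)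
    (s : ℝ) : ‖interactionPicture a b s‖ ≤ ‖b‖ :=
  calc ‖interactionPicture a b s‖
      ≤ ‖exp (s • a)‖ * ‖b‖ * ‖exp (-s • a)‖ := norm_mul₃_le
    _ ≤ 1 * ‖b‖ * 1 := by gcongr <;> exact ha _
    _ = ‖b‖ := by ring

variable [CompleteSpace 𝔸]

lemma exp_neg_smul_mul_exp_smul (a : 𝔸) (s : ℝ) :
    exp (-s • a) * exp (s • a) = 1 := by
  let _ : NormedAlgebra ℚ 𝔸 := NormedAlgebra.restrictScalars ℚ ℝ 𝔸
  rw [neg_smul, ← exp_add_of_commute (Commute.refl (s • a)).neg_left,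
    neg_add_cancel, exp_zero]

lemma interactionPropagator_one_mul_exp (a b : 𝔸) :
    interactionPropagator a b 1 * exp a = exp (a + b) := by
  have hinv := exp_neg_smul_mul_exp_smul a 1
  rw [one_smul] at hinv
  rw [interactionPropagator, mul_assoc, hinv, one_smul, mul_one]

lemma hasDerivAt_interactionPropagator (a b : 𝔸) (s : ℝ) :
    HasDerivAt (interactionPropagator a b)
      (interactionPropagator a b s * interactionPicture a b s) s := by
  have hfull := hasDerivAt_exp_smul_const (𝕂 := ℝ) (a + b) s
  have hfree := (hasDerivAt_exp_smul_const' (𝕂 := ℝ) a (-s)).scomp s (hasDerivAt_neg s)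
  refine (hfull.mul hfree).congr_deriv ?_
  calc exp (s • (a + b)) * (a + b) * exp (-s • a)
        + exp (s • (a + b)) * ((-1 : ℝ) • (a * exp (-s • a)))
      = exp (s • (a + b)) * 1 * b * exp (-s • a) := by
        rw [neg_one_smul]
        noncomm_ring
    _ = interactionPropagator a b s * interactionPicture a b s := by
        rw [← exp_neg_smul_mul_exp_smul a s]
        simp only [interactionPropagator, interactionPicture, mul_assoc]

lemma norm_interactionPropagator_le {a : 𝔸} (ha : ∀ s : ℝ, ‖exp (s • a)‖ ≤ 1) (b : 𝔸)
    {s : ℝ} (hs : 0 ≤ s) : ‖interactionPropagator a b s‖ ≤ Real.exp (s * ‖b‖) := by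
  have hderiv := hasDerivAt_interactionPropagator a b
  have hinit : ‖interactionPropagator a b 0‖ ≤ 1 := by
    simpa [interactionPropagator_zero] using ha 0
  have hbound : ∀ u ∈ Set.Ico 0 s, ‖interactionPropagator a b u * interactionPicture a b u‖ ≤
      ‖b‖ * ‖interactionPropagator a b u‖ + 0 := fun u _ => by
    rw [add_zero, mul_comm ‖b‖]
    exact (norm_mul_le _ _).trans (by gcongr; exact norm_interactionPicture_le ha b u)
  have hgronwall := norm_le_gronwallBound_of_norm_deriv_right_le
    (fun u _ => (hderiv u).continuousAt.continuousWithinAt)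
    (fun u _ => (hderiv u).hasDerivWithinAt) hinit hbound s ⟨hs, le_rfl⟩
  simpa [gronwallBound_ε0, mul_comm] using hgronwall

end InteractionPicture

lemma mapsTo_exp_of_mapsTo {𝕜 E : Type*} [RCLike 𝕜] [NormedAddCommGroup E] [NormedSpace 𝕜 E]
    [CompleteSpace E] {K : Submodule 𝕜 E} (hK : IsClosed (K : Set E)) {a : E →L[𝕜] E}
    (ha : Set.MapsTo a K K) : Set.MapsTo (exp a : E →L[𝕜] E) K K := fun x hx => by
  have hpow (n : ℕ) : (a ^ n) x ∈ K := by
    rw [FunLike.coe_pow_eq_iterate]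
    exact ha.iterate n hx
  have hsum : HasSum (fun n : ℕ => ((n.factorial : 𝕜)⁻¹ • a ^ n) x) (exp a x) :=
    (exp_series_hasSum_exp' (𝕂 := 𝕜) a).mapL (ContinuousLinearMap.apply 𝕜 E x)
  exact hK.mem_of_tendsto hsum (.of_forall fun _ =>
    K.sum_mem fun n _ => K.smul_mem _ (hpow n))

section Dyson

variable {E F : Type*} [NormedAddCommGroup E] [NormedSpace ℂ E] [CompleteSpace E]
  [NormedAddCommGroup F] [NormedSpace ℂ F]

lemma mapsTo_exp_smul_of_mapsTo {K : Submodule ℂ E} (hK : IsClosed (K : Set E)) {a : E →L[ℂ] E}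
    (ha : Set.MapsTo a K K) (s : ℝ) : Set.MapsTo (exp (s • a) : E →L[ℂ] E) K K :=
  mapsTo_exp_of_mapsTo hK fun _ hx => (K.restrictScalars ℝ).smul_mem s (ha hx)

lemma mapsTo_interactionPicture {K L : Submodule ℂ E} (hK : IsClosed (K : Set E))
    (hL : IsClosed (L : Set E)) {a b : E →L[ℂ] E} (haK : Set.MapsTo a K K)
    (haL : Set.MapsTo a L L) (hb : Set.MapsTo b K L) (s : ℝ) :
    Set.MapsTo (interactionPicture a b s : E →L[ℂ] E) K L :=
  (mapsTo_exp_smul_of_mapsTo hL haL s).comp (hb.comp (mapsTo_exp_smul_of_mapsTo hK haK (-s)))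

lemma hasDerivAt_map_interactionPropagator_apply (a b : E →L[ℂ] E) (f : E →L[ℂ] F) (ψ : E)
    (s : ℝ) :
    HasDerivAt (fun u : ℝ => f (interactionPropagator a b u ψ))
      (f (interactionPropagator a b s (interactionPicture a b s ψ))) s :=
  ((f.comp (ContinuousLinearMap.apply ℂ E ψ)).restrictScalars ℝ).hasFDerivAt.comp_hasDerivAt s
    (hasDerivAt_interactionPropagator a b s)

variable {a b : E →L[ℂ] E} {K : ℕ → Submodule ℂ E} {f : E →L[ℂ] F}

theorem norm_map_interactionPropagator_apply_le (ha : ∀ s : ℝ, ‖exp (s • a)‖ ≤ 1)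
    (hK : ∀ n, IsClosed (K n : Set E)) (haK : ∀ n, Set.MapsTo a (K n) (K n))
    (hbK : ∀ n, Set.MapsTo b (K (n + 1)) (K n)) (hf : ∀ n, ∀ x ∈ K (n + 1), f x = 0)
    {n : ℕ} {ψ : E} (hψ : ψ ∈ K n) {s : ℝ} (hs : 0 ≤ s) :
    ‖f (interactionPropagator a b s ψ)‖ ≤ ‖f‖ * ‖ψ‖ * expTail n (s * ‖b‖) := by
  induction n generalizing ψ s with
  | zero =>
    calc ‖f (interactionPropagator a b s ψ)‖
        ≤ ‖f‖ * (‖interactionPropagator a b s‖ * ‖ψ‖) :=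
          f.le_opNorm_of_le (ContinuousLinearMap.le_opNorm _ _)
      _ ≤ ‖f‖ * (Real.exp (s * ‖b‖) * ‖ψ‖) := by
          gcongr
          exact norm_interactionPropagator_le ha b hs
      _ = ‖f‖ * ‖ψ‖ * expTail 0 (s * ‖b‖) := by
          rw [expTail_zero]
          ring
  | succ n ih =>
    have hderiv := hasDerivAt_map_interactionPropagator_apply a b f ψ
    have hinit : ‖f (interactionPropagator a b 0 ψ)‖ ≤
        ‖f‖ * ‖ψ‖ * expTail (n + 1) (0 * ‖b‖) := by
      simp [interactionPropagator_zero, expTail_succ_apply_zero, hf n ψ hψ]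
    have hboundary (u : ℝ) : HasDerivAt (fun u => ‖f‖ * ‖ψ‖ * expTail (n + 1) (u * ‖b‖))
        (‖f‖ * ‖ψ‖ * (expTail n (u * ‖b‖) * ‖b‖)) u :=
      ((hasDerivAt_expTail_succ n _).comp u (hasDerivAt_mul_const ‖b‖)).const_mul _
    have hbound : ∀ u ∈ Set.Ico 0 s,
        ‖f (interactionPropagator a b u (interactionPicture a b u ψ))‖ ≤
          ‖f‖ * ‖ψ‖ * (expTail n (u * ‖b‖) * ‖b‖) := fun u hu => by
      have htail : 0 ≤ expTail n (u * ‖b‖) :=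
        expTail_nonneg n (mul_nonneg hu.1 (norm_nonneg b))
      calc ‖f (interactionPropagator a b u (interactionPicture a b u ψ))‖
          ≤ ‖f‖ * ‖interactionPicture a b u ψ‖ * expTail n (u * ‖b‖) :=
            ih (mapsTo_interactionPicture (hK _) (hK _) (haK _) (haK _) (hbK n) u hψ) hu.1
        _ ≤ ‖f‖ * (‖b‖ * ‖ψ‖) * expTail n (u * ‖b‖) := by
            gcongr
            exact ContinuousLinearMap.le_of_opNorm_le _ (norm_interactionPicture_le ha b u) ψ
        _ = ‖f‖ * ‖ψ‖ * (expTail n (u * ‖b‖) * ‖b‖) := by ring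
    exact image_norm_le_of_norm_deriv_right_le_deriv_boundary
      (fun u _ => (hderiv u).continuousAt.continuousWithinAt)
      (fun u _ => (hderiv u).hasDerivWithinAt) hinit hboundary hbound ⟨hs, le_rfl⟩

theorem norm_map_exp_add_apply_le (ha : ∀ s : ℝ, ‖exp (s • a)‖ ≤ 1)
    (hK : ∀ n, IsClosed (K n : Set E)) (haK : ∀ n, Set.MapsTo a (K n) (K n))
    (hbK : ∀ n, Set.MapsTo b (K (n + 1)) (K n)) (hf : ∀ n, ∀ x ∈ K (n + 1), f x = 0)
    {n : ℕ} {ψ : E} (hψ : ψ ∈ K n) :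
    ‖f (exp (a + b) ψ)‖ ≤ ‖f‖ * ‖ψ‖ * expTail n ‖b‖ := by
  have hexp : ‖exp a ψ‖ ≤ ‖ψ‖ := by
    simpa using ContinuousLinearMap.le_of_opNorm_le _ (ha 1) ψ
  calc ‖f (exp (a + b) ψ)‖
      = ‖f (interactionPropagator a b 1 (exp a ψ))‖ := by
        rw [← interactionPropagator_one_mul_exp, mul_apply_eq_comp]
    _ ≤ ‖f‖ * ‖exp a ψ‖ * expTail n ‖b‖ := by
        simpa using norm_map_interactionPropagator_apply_le ha hK haK hbK hf
          (mapsTo_exp_of_mapsTo (hK n) (haK n) hψ) zero_le_one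
    _ ≤ ‖f‖ * ‖ψ‖ * expTail n ‖b‖ := by
        gcongr
        exact expTail_nonneg n (norm_nonneg b)

end Dyson

lemma norm_exp_smul_le_one_of_mem_skewAdjoint {𝔸 : Type*} [NormedRing 𝔸] [NormedAlgebra ℝ 𝔸]
    [CompleteSpace 𝔸] [StarRing 𝔸] [CStarRing 𝔸] [StarModule ℝ 𝔸] {a : 𝔸} (ha : a ∈ skewAdjoint 𝔸)
    (s : ℝ) : ‖exp (s • a)‖ ≤ 1 := by
  let _ : NormedAlgebra ℚ 𝔸 := NormedAlgebra.restrictScalars ℚ ℝ 𝔸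
  rcases subsingleton_or_nontrivial 𝔸 with _ | _
  · rw [Subsingleton.elim (exp (s • a)) 0, norm_zero]
    exact zero_le_one
  · exact (CStarRing.norm_of_mem_unitary
      (exp_mem_unitary_of_mem_skewAdjoint (skewAdjoint.smul_mem s ha))).le

section Range

variable {ι X 𝕜 : Type*} [PseudoMetricSpace X] [RCLike 𝕜]

/-- The matrix `M` couples only basis vectors whose degrees are at distance at most `r`. Degrees
may lie in any metric space, such as the sites of a lattice; range `0` means that `M` preserves the
grading. -/
def HasRangeLE {R : Type*} [Zero R] (deg : ι → X) (r : ℝ) (M : Matrix ι ι R) : Prop :=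
  ∀ j k, r < dist (deg j) (deg k) → M j k = 0

/-- The vectors whose components of degree within distance `R` of `c` all vanish; for `R < 0` this
is the whole space. A matrix of range `r` decreases `R` by at most `r`, so these subspaces record
how far a vector still is from `c`. -/
def vanishingNear (𝕜 : Type*) [RCLike 𝕜] (deg : ι → X) (c : X) (R : ℝ) :
    Submodule 𝕜 (EuclideanSpace 𝕜 ι) where
  carrier := {x | ∀ j, dist (deg j) c ≤ R → x j = 0}
  add_mem' hx hy j hj := by simp [hx j hj, hy j hj]
  zero_mem' _ _ := rfl
  smul_mem' z x hx j hj := by simp [hx j hj]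

variable {deg : ι → X}

lemma HasRangeLE.smul {R S : Type*} [Zero R] [SMulZeroClass S R] {r : ℝ} {M : Matrix ι ι R}
    (hM : HasRangeLE deg r M) (z : S) : HasRangeLE deg r (z • M) := fun j k hjk => by
  rw [Matrix.smul_apply, hM j k hjk, smul_zero]

lemma mem_vanishingNear_of_lt_dist {l c : X} {R : ℝ} {x : EuclideanSpace 𝕜 ι}
    (hx : ∀ j, deg j ≠ l → x j = 0) (hR : R < dist l c) : x ∈ vanishingNear 𝕜 deg c R :=
  fun j hj => hx j fun hjl => hR.not_ge (hjl ▸ hj)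

variable [Fintype ι]

lemma inner_eq_zero_of_mem_vanishingNear {c : X} {R : ℝ} (hR : 0 ≤ R) {x y : EuclideanSpace 𝕜 ι}
    (hx : ∀ j, deg j ≠ c → x j = 0) (hy : y ∈ vanishingNear 𝕜 deg c R) : inner 𝕜 x y = 0 := by
  rw [PiLp.inner_apply]
  refine Finset.sum_eq_zero fun j _ => ?_
  rcases eq_or_ne (deg j) c with hj | hj
  · rw [hy j (by rwa [hj, dist_self]), inner_zero_right]
  · rw [hx j hj, inner_zero_left]

lemma HasRangeLE.mapsTo_vanishingNear [DecidableEq ι] {r R S : ℝ} {M : Matrix ι ι 𝕜}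
    (hM : HasRangeLE deg r M) (c : X) (hRS : R + r ≤ S) :
    Set.MapsTo (toEuclideanCLM (𝕜 := 𝕜) M) (vanishingNear 𝕜 deg c S)
      (vanishingNear 𝕜 deg c R) := fun x hx j hj => by
  rw [ofLp_toEuclideanCLM, mulVec_apply_eq_sum]
  refine Finset.sum_eq_zero fun k _ => ?_
  rcases lt_or_ge r (dist (deg j) (deg k)) with hjk | hjk
  · rw [hM j k hjk, zero_mul]
  · have hk : dist (deg k) c ≤ S :=
      calc dist (deg k) c ≤ dist (deg j) (deg k) + dist (deg j) c := dist_triangle_left _ _ _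
        _ ≤ r + R := add_le_add hjk hj
        _ ≤ S := by rwa [add_comm]
    rw [hx k hk, mul_zero]

end Range

section Matrix

variable {ι 𝕜 : Type*} [Fintype ι] [DecidableEq ι] [RCLike 𝕜]

open scoped Matrix.Norms.L2Operator in
lemma toEuclideanCLM_exp (M : Matrix ι ι 𝕜) :
    toEuclideanCLM (𝕜 := 𝕜) (exp M) = exp (toEuclideanCLM (𝕜 := 𝕜) M) := by
  let _ : NormedAlgebra ℚ (Matrix ι ι 𝕜) := NormedAlgebra.restrictScalars ℚ 𝕜 _
  exact map_exp (toEuclideanCLM (n := ι) (𝕜 := 𝕜)) (LinearMap.continuous_of_finiteDimensional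
    (toEuclideanCLM (n := ι) (𝕜 := 𝕜)).toAlgEquiv.toLinearMap) M

lemma toEuclideanCLM_smul_mem_skewAdjoint {A : Matrix ι ι 𝕜} (hA : A.IsHermitian) {z : 𝕜}
    (hz : z ∈ skewAdjoint 𝕜) :
    toEuclideanCLM (𝕜 := 𝕜) (z • A) ∈
      skewAdjoint (EuclideanSpace 𝕜 ι →L[𝕜] EuclideanSpace 𝕜 ι) := by
  rw [skewAdjoint.mem_iff, ← map_star, ← map_neg]
  exact congrArg _ (IsSelfAdjoint.smul_mem_skewAdjoint hz hA)

variable {X : Type*} [PseudoMetricSpace X]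

theorem norm_inner_exp_smul_add_le {deg : ι → X} {d : ℝ} (hd : 0 ≤ d) {A B : Matrix ι ι ℂ}
    (hA : A.IsHermitian) (hAdeg : HasRangeLE deg 0 A) (hBdeg : HasRangeLE deg d B) {l l' : X}
    {φ ψ : EuclideanSpace ℂ ι} (hφsupp : ∀ j, deg j ≠ l → φ j = 0)
    (hψsupp : ∀ j, deg j ≠ l' → ψ j = 0) {n : ℕ} (hn : (n - 1) * d < dist l' l)
    {z : ℂ} (hz : z ∈ skewAdjoint ℂ) :
    ‖inner ℂ φ (toEuclideanCLM (𝕜 := ℂ) (exp (z • (A + B))) ψ)‖ ≤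
      ‖φ‖ * ‖ψ‖ * expTail n (‖z‖ * ‖toEuclideanCLM (𝕜 := ℂ) B‖) := by
  let K (m : ℕ) := vanishingNear ℂ deg l ((m - 1) * d)
  have hψK : ψ ∈ K n := mem_vanishingNear_of_lt_dist hψsupp hn
  have hφK (m : ℕ) : ∀ x ∈ K (m + 1), innerSL ℂ φ x = 0 := fun x hx =>
    inner_eq_zero_of_mem_vanishingNear (by push_cast; rw [add_sub_cancel_right]; positivity)
      hφsupp hx
  have hAK (m : ℕ) := (hAdeg.smul z).mapsTo_vanishingNear l (add_zero (((m : ℝ) - 1) * d)).le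
  have hBK (m : ℕ) := (hBdeg.smul z).mapsTo_vanishingNear l
    (show ((m : ℝ) - 1) * d + d ≤ ((m + 1 : ℕ) - 1) * d by push_cast; linarith)
  have hdyson := norm_map_exp_add_apply_le
    (norm_exp_smul_le_one_of_mem_skewAdjoint (toEuclideanCLM_smul_mem_skewAdjoint hA hz))
    (fun m => (K m).closed_of_finiteDimensional) hAK hBK hφK hψK
  rwa [← map_add, ← smul_add, ← toEuclideanCLM_exp, map_smul, norm_smul, innerSL_apply_norm,
    innerSL_apply_apply] at hdyson

theorem lieb_robinson_transition_amplitude_bound_general {deg : ι → X} {d : ℝ} (hd : 0 < d)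
    {A B : Matrix ι ι ℂ} (hA : A.IsHermitian) (hAdeg : HasRangeLE deg 0 A)
    (hBdeg : HasRangeLE deg d B) {l l' : X} {φ ψ : EuclideanSpace ℂ ι}
    (hφsupp : ∀ j, deg j ≠ l → φ j = 0) (hψsupp : ∀ j, deg j ≠ l' → ψ j = 0)
    {n₀ : ℕ} (hn₀ : n₀ = ⌈dist l l' / d⌉₊) (t : ℝ) :
    ‖inner ℂ φ (toEuclideanCLM (𝕜 := ℂ)
        (exp ((-(Complex.I * (t : ℂ))) • (A + B))) ψ)‖ ≤
      ‖φ‖ * ‖ψ‖ * expTail n₀ (|t| * ‖toEuclideanCLM (𝕜 := ℂ) B‖) ∧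
    (2 * (|t| * ‖toEuclideanCLM (𝕜 := ℂ) B‖) ≤ n₀ →
      ‖inner ℂ φ (toEuclideanCLM (𝕜 := ℂ)
          (exp ((-(Complex.I * (t : ℂ))) • (A + B))) ψ)‖ ≤
        ‖φ‖ * ‖ψ‖ * (2 / (n₀.factorial : ℝ) *
          (|t| * ‖toEuclideanCLM (𝕜 := ℂ) B‖) ^ n₀)) := by
  have hn : ((n₀ : ℝ) - 1) * d < dist l' l := by
    rw [dist_comm, ← lt_div_iff₀ hd, sub_lt_iff_lt_add, hn₀]
    exact Nat.ceil_lt_add_one (by positivity)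
  have hskew : -(Complex.I * (t : ℂ)) ∈ skewAdjoint ℂ := by simp [skewAdjoint.mem_iff]
  have htail := norm_inner_exp_smul_add_le hd.le hA hAdeg hBdeg hφsupp hψsupp hn hskew
  rw [norm_neg, norm_mul, Complex.norm_I, one_mul, Complex.norm_real, Real.norm_eq_abs] at htail
  refine ⟨htail, fun hsmall => htail.trans ?_⟩
  gcongr
  exact expTail_le_two_div_factorial_mul_pow (by positivity) hsmall

end Matrix

end

/-- finite-dimensional graded version of Lemma 3 of the paper;
a Lieb–Robinson-type transition-amplitude bound.  If `A, B` are Hermitian, `A` preserves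
the grading `deg`, `B` shifts the grading by at most `d`, `φ, ψ` are unit vectors supported
in degrees `l, l'`, and `n₀ = ⌈|l - l'| / d⌉`, then
`|⟨φ, e^{-𝕚(A+B)t} ψ⟩| ≤ ∑_{n ≥ n₀} (|t|‖B‖)ⁿ/n!`, and if moreover `n₀ ≥ 2|t|‖B‖`
then `|⟨φ, e^{-𝕚(A+B)t} ψ⟩| ≤ (2/n₀!)(|t|‖B‖)^{n₀}`. -/
theorem lieb_robinson_transition_amplitude_bound
    {ι : Type*} [Fintype ι] [DecidableEq ι]
    (deg : ι → ℕ) (d : ℕ) (hd : 1 ≤ d)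
    (A B : Matrix ι ι ℂ) (hA : A.IsHermitian) (hB : B.IsHermitian)
    (hAdeg : ∀ j k, deg j ≠ deg k → A j k = 0)
    (hBdeg : ∀ j k, (d : ℤ) < |(deg j : ℤ) - (deg k : ℤ)| → B j k = 0)
    (l l' : ℕ)
    (φ ψ : EuclideanSpace ℂ ι) (hφ : ‖φ‖ = 1) (hψ : ‖ψ‖ = 1)
    (hφsupp : ∀ j, deg j ≠ l → φ j = 0)
    (hψsupp : ∀ j, deg j ≠ l' → ψ j = 0)
    (n₀ : ℕ) (hn₀ : n₀ = ⌈(((l : ℤ) - (l' : ℤ)).natAbs : ℝ) / (d : ℝ)⌉₊)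
    (t : ℝ) :
    ‖(inner ℂ φ (Matrix.toEuclideanCLM (𝕜 := ℂ)
        (NormedSpace.exp ((-(Complex.I * (t : ℂ))) • (A + B))) ψ) : ℂ)‖ ≤
      ∑' n : ℕ, (|t| * ‖Matrix.toEuclideanCLM (𝕜 := ℂ) B‖) ^ (n₀ + n) /
        ((n₀ + n).factorial : ℝ) ∧
    (2 * (|t| * ‖Matrix.toEuclideanCLM (𝕜 := ℂ) B‖) ≤ (n₀ : ℝ) →
      ‖(inner ℂ φ (Matrix.toEuclideanCLM (𝕜 := ℂ)
          (NormedSpace.exp ((-(Complex.I * (t : ℂ))) • (A + B))) ψ) : ℂ)‖ ≤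
        2 / (n₀.factorial : ℝ) * (|t| * ‖Matrix.toEuclideanCLM (𝕜 := ℂ) B‖) ^ n₀) := by
  have hdist (j k : ℕ) : dist j k = ((|(j : ℤ) - (k : ℤ)| : ℤ) : ℝ) := by
    rw [Nat.dist_eq]
    push_cast
    rfl
  have hn₀' : n₀ = ⌈dist l l' / (d : ℝ)⌉₊ := by
    rw [hn₀, hdist, Nat.cast_natAbs]
  have hArange : HasRangeLE deg 0 A := fun j k hjk => hAdeg j k (dist_pos.mp hjk)
  have hBrange : HasRangeLE deg d B := fun j k hjk =>
    hBdeg j k (by rw [hdist] at hjk; exact_mod_cast hjk)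
  have hd' : (0 : ℝ) < d := by exact_mod_cast hd
  simpa [hφ, hψ, expTail] using
    lieb_robinson_transition_amplitude_bound_general hd' hA hArange hBrange hφsupp hψsupp hn₀' t
end

section
/- Sparsity part of Lemma 1: with the truncated Fock matrices of Definition 2’s Hamiltonian, for every n ∈ B the number of n' ∈ B with (H_m)_{n,n'} ≠ 0 is at most c · 2^d · m; i.e., the matrix H_m is (c·2^d·m)-sparse. -/
open Finset

/-- Matrix element `⟨a| x̂ |b⟩` of `x̂ = (â + â†)/√2` in the number basis:
`√(max(a,b)/2)` if `|a - b| = 1`, and `0` otherwise. -/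
noncomputable def xiElem (a b : ℕ) : ℂ :=
  if a = b + 1 ∨ b = a + 1 then (Real.sqrt ((max a b : ℝ) / 2) : ℂ) else 0

/-- Matrix element `⟨a| k̂ |b⟩` of `k̂ = 𝕚(â† - â)/√2` in the number basis:
`𝕚 (a - b) √(max(a,b)/2)` if `|a - b| = 1`, and `0` otherwise. -/
noncomputable def kappaElem (a b : ℕ) : ℂ :=
  if a = b + 1 ∨ b = a + 1 then
    Complex.I * ((a : ℂ) - (b : ℂ)) * (Real.sqrt ((max a b : ℝ) / 2) : ℂ)
  else 0

/-- The truncated occupation-number basis: occupation configurations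
`n : Fin N → ℕ` with total occupation number `∑ i, n i ≤ m`. -/
abbrev FockBasis (N m : ℕ) := {n : Fin N → ℕ // ∑ i, n i ≤ m}

instance fockBasisFinite (N m : ℕ) : Finite (FockBasis N m) := by
  have h : ∀ (x : FockBasis N m) (i : Fin N), x.1 i < m + 1 := fun x i =>
    Nat.lt_succ_of_le (le_trans
      (Finset.single_le_sum (f := x.1) (fun _ _ => Nat.zero_le _) (Finset.mem_univ i)) x.2)
  exact Finite.of_injective
    (fun x (i : Fin N) => (⟨x.1 i, h x i⟩ : Fin (m + 1)))
    (fun a b hab => Subtype.ext (funext fun i => congrArg Fin.val (congrFun hab i)))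

noncomputable instance fockBasisFintype (N m : ℕ) : Fintype (FockBasis N m) :=
  Fintype.ofFinite _

/-- The truncated matrix `f_p` of the local term
`∑_{i ∈ p} α_{p→i} k̂_i ∏_{j ∈ p \ {i}} x̂_j` in the occupation-number basis. -/
noncomputable def fockOp (N m : ℕ) (α : Finset (Fin N) → Fin N → ℝ)
    (p : Finset (Fin N)) :
    Matrix (FockBasis N m) (FockBasis N m) ℂ := fun n n' =>
  if ∀ k, k ∉ p → n.1 k = n'.1 k then
    ∑ i ∈ p, (α p i : ℂ) * kappaElem (n.1 i) (n'.1 i) *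
      ∏ j ∈ p.erase i, xiElem (n.1 j) (n'.1 j)
  else 0

/-- The truncated Hamiltonian `H_m = ∑_{p ∈ S} f_p`. -/
noncomputable def fockHam (N m : ℕ) (S : Finset (Finset (Fin N)))
    (α : Finset (Fin N) → Fin N → ℝ) :
    Matrix (FockBasis N m) (FockBasis N m) ℂ :=
  ∑ p ∈ S, fockOp N m α p

/-!
Since `κ(a, b) = -𝕚 ξ(a, b)` whenever `a ≤ b`, an entry of `f_p` between `n` and `n'` with `n ≤ n'`
on `p` equals `-𝕚 (∑ i ∈ p, α_{p→i}) ∏ j ∈ p, ξ(n_j, n'_j) = 0`. A nonzero entry therefore lowers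
some mode of `p`, which must be occupied in `n`. At most `m` modes are occupied, each lies in at
most `c` members of `S`, and each `f_p` connects `n` to at most `2 ^ d` configurations, one step up
or down for each mode of `p`.
-/

/-- The configurations obtained from `n` by moving every mode in `p` one step up or down and
keeping the other modes fixed. Since `0 - 1 = 0` in `ℕ`, an empty mode of `p` may also stay
empty; this only enlarges the set. -/
def unitShifts {ι : Type*} [Fintype ι] [DecidableEq ι] (p : Finset ι) (n : ι → ℕ) :
    Finset (ι → ℕ) :=
  Fintype.piFinset fun k => if k ∈ p then {n k - 1, n k + 1} else {n k}

/-- The members of `S` containing an occupied mode of `n`: the local terms of the Hamiltonian whose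
row at `n` can be nonzero. -/
def activeTerms {ι : Type*} (S : Finset (Finset ι)) (n : ι → ℕ) : Finset (Finset ι) :=
  {p ∈ S | ∃ i ∈ p, n i ≠ 0}

section Counting

variable {ι : Type*}

lemma mem_activeTerms {S : Finset (Finset ι)} {n : ι → ℕ} {p : Finset ι} :
    p ∈ activeTerms S n ↔ p ∈ S ∧ ∃ i ∈ p, n i ≠ 0 :=
  mem_filter

lemma card_unitShifts_le [Fintype ι] [DecidableEq ι] (p : Finset ι) (n : ι → ℕ) :
    #(unitShifts p n) ≤ 2 ^ #p := by
  calc #(unitShifts p n)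
      = ∏ k, #(if k ∈ p then {n k - 1, n k + 1} else {n k}) := Fintype.card_piFinset _
    _ ≤ ∏ k, if k ∈ p then 2 else 1 := by
        gcongr with k
        split_ifs
        · exact card_le_two
        · exact (card_singleton _).le
    _ = 2 ^ #p := by rw [Fintype.prod_ite_mem, prod_const]

lemma card_filter_ne_zero_le_sum (s : Finset ι) (n : ι → ℕ) :
    #{i ∈ s | n i ≠ 0} ≤ ∑ i ∈ s, n i := by
  rw [card_filter]
  gcongr with i
  split_ifs <;> omega

lemma card_activeTerms_le_mul [Fintype ι] [DecidableEq ι] {S : Finset (Finset ι)} {n : ι → ℕ}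
    {c : ℕ} (hc : ∀ i, n i ≠ 0 → #{p ∈ S | i ∈ p} ≤ c) :
    #(activeTerms S n) ≤ #{i | n i ≠ 0} * c := by
  have hcover : activeTerms S n ⊆ ({i | n i ≠ 0} : Finset ι).biUnion fun i => {p ∈ S | i ∈ p} := by
    intro p hp
    obtain ⟨hpS, i, hip, hi⟩ := mem_activeTerms.mp hp
    exact mem_biUnion.mpr ⟨i, (mem_filter_univ i).mpr hi, mem_filter.mpr ⟨hpS, hip⟩⟩
  exact (card_le_card hcover).trans <|
    card_biUnion_le_card_mul _ _ c fun i hi => hc i ((mem_filter_univ i).mp hi)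

end Counting

lemma adjacent_of_xiElem_ne_zero {a b : ℕ} (h : xiElem a b ≠ 0) : a = b + 1 ∨ b = a + 1 :=
  of_not_not fun hab => h (if_neg hab)

lemma adjacent_of_kappaElem_ne_zero {a b : ℕ} (h : kappaElem a b ≠ 0) :
    a = b + 1 ∨ b = a + 1 :=
  of_not_not fun hab => h (if_neg hab)

lemma kappaElem_eq_neg_I_mul_xiElem_of_le {a b : ℕ} (hab : a ≤ b) :
    kappaElem a b = -Complex.I * xiElem a b := by
  obtain rfl | hne := eq_or_ne b (a + 1)
  · simp [kappaElem, xiElem]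
  · have hnot : ¬(a = b + 1 ∨ b = a + 1) := by omega
    simp [kappaElem, xiElem, hnot]

section LocalTerm

variable {N m : ℕ} {α : Finset (Fin N) → Fin N → ℝ} {p : Finset (Fin N)} {n n' : FockBasis N m}

lemma mem_unitShifts_of_fockOp_ne_zero (h : fockOp N m α p n n' ≠ 0) :
    n'.1 ∈ unitShifts p n.1 := by
  obtain ⟨hoff, hsum⟩ := ite_ne_right_iff.mp h
  obtain ⟨i, -, hterm⟩ := exists_ne_zero_of_sum_ne_zero hsum
  have hadj : ∀ k ∈ p, n.1 k = n'.1 k + 1 ∨ n'.1 k = n.1 k + 1 := fun k hk => by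
    obtain rfl | hki := eq_or_ne k i
    · exact adjacent_of_kappaElem_ne_zero (right_ne_zero_of_mul (left_ne_zero_of_mul hterm))
    · exact adjacent_of_xiElem_ne_zero <|
        prod_ne_zero_iff.mp (right_ne_zero_of_mul hterm) k (mem_erase.mpr ⟨hki, hk⟩)
  refine Fintype.mem_piFinset.mpr fun k => ?_
  split_ifs with hk
  · have := hadj k hk
    simp only [mem_insert, mem_singleton]
    omega
  · exact mem_singleton.mpr (hoff k hk).symm

lemma fockOp_eq_zero_of_forall_le (hα : ∑ i ∈ p, α p i = 0) (hle : ∀ i ∈ p, n.1 i ≤ n'.1 i) :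
    fockOp N m α p n n' = 0 := by
  have hterm : ∀ i ∈ p, (α p i : ℂ) * kappaElem (n.1 i) (n'.1 i) *
      ∏ j ∈ p.erase i, xiElem (n.1 j) (n'.1 j) =
      α p i * (-Complex.I * ∏ j ∈ p, xiElem (n.1 j) (n'.1 j)) := fun i hi => by
    rw [kappaElem_eq_neg_I_mul_xiElem_of_le (hle i hi), ← mul_prod_erase p _ hi]
    ring
  have hα' : ∑ i ∈ p, (α p i : ℂ) = 0 := by exact_mod_cast hα
  rw [fockOp, sum_congr rfl hterm, ← sum_mul, hα', zero_mul, ite_self]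

lemma exists_lt_of_fockOp_ne_zero (hα : ∑ i ∈ p, α p i = 0) (h : fockOp N m α p n n' ≠ 0) :
    ∃ i ∈ p, n'.1 i < n.1 i := by
  contrapose! h
  exact fockOp_eq_zero_of_forall_le hα h

end LocalTerm

lemma mem_biUnion_unitShifts_of_fockHam_ne_zero {N m : ℕ} {S : Finset (Finset (Fin N))}
    {α : Finset (Fin N) → Fin N → ℝ} (hα : ∀ p ∈ S, ∑ i ∈ p, α p i = 0) {n n' : FockBasis N m}
    (h : fockHam N m S α n n' ≠ 0) :
    n'.1 ∈ (activeTerms S n.1).biUnion (unitShifts · n.1) := by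
  rw [fockHam, Matrix.sum_apply] at h
  obtain ⟨p, hp, hne⟩ := exists_ne_zero_of_sum_ne_zero h
  obtain ⟨i, hip, hlt⟩ := exists_lt_of_fockOp_ne_zero (hα p hp) hne
  have hactive : p ∈ activeTerms S n.1 :=
    mem_activeTerms.mpr ⟨hp, i, hip, Nat.ne_zero_of_lt hlt⟩
  exact mem_biUnion.mpr ⟨p, hactive, mem_unitShifts_of_fockOp_ne_zero hne⟩

/-- sparsity part of Lemma 1 of the paper.  The truncated Hamiltonian
`H_m` is `(c · 2^d · m)`-sparse: every row has at most `c · 2^d · m` nonzero entries. -/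
theorem fockHam_sparsity
    (N m d c : ℕ)
    (S : Finset (Finset (Fin N)))
    (α : Finset (Fin N) → Fin N → ℝ)
    (hcard : ∀ p ∈ S, 2 ≤ p.card ∧ p.card ≤ d)
    (hcover : ∀ i : Fin N, 1 ≤ (S.filter (fun p => i ∈ p)).card ∧
      (S.filter (fun p => i ∈ p)).card ≤ c)
    (hα : ∀ p ∈ S, ∑ i ∈ p, α p i = 0)
    (n : FockBasis N m) :
    {n' : FockBasis N m | fockHam N m S α n n' ≠ 0}.ncard ≤ c * 2 ^ d * m := by
  have hoccupied : #{i | n.1 i ≠ 0} ≤ m := (card_filter_ne_zero_le_sum univ n.1).trans n.2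
  have hactive : #(activeTerms S n.1) ≤ #{i | n.1 i ≠ 0} * c :=
    card_activeTerms_le_mul fun i _ => (hcover i).2
  have hshifts : ∀ p ∈ activeTerms S n.1, #(unitShifts p n.1) ≤ 2 ^ d := fun p hp =>
    (card_unitShifts_le p n.1).trans <|
      Nat.pow_le_pow_right two_pos (hcard p (mem_activeTerms.mp hp).1).2
  calc {n' : FockBasis N m | fockHam N m S α n n' ≠ 0}.ncard
      ≤ (↑((activeTerms S n.1).biUnion (unitShifts · n.1)) : Set (Fin N → ℕ)).ncard :=
        Set.ncard_le_ncard_of_injOn Subtype.val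
          (fun _ => mem_biUnion_unitShifts_of_fockHam_ne_zero hα) Subtype.val_injective.injOn
    _ = #((activeTerms S n.1).biUnion (unitShifts · n.1)) := Set.ncard_coe_finset _
    _ ≤ #(activeTerms S n.1) * 2 ^ d := card_biUnion_le_card_mul _ _ _ hshifts
    _ ≤ m * c * 2 ^ d := by grw [hactive, hoccupied]
    _ = c * 2 ^ d * m := by ring
end
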